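/- Let η : ℂ ∖ [0,+∞) → ℂ ∖ {0} be an analytic function with η(conj(z)) = conj(η(z)) for all z in its domain. Then the following are equivalent: (1) there exists a Borel probability measure μ ≠ δ₀ on [0,+∞) such that η = η_μ; (2) lim_{x↑0, x<0} η(x) = 0 and arg η(z) ∈ [arg z, π) for all z ∈ ℂ⁺. Moreover, a probability measure μ ≠ δ₀ on [0,+∞) is a point mass if and only if there exists z ∈ ℂ⁺ with arg η_μ(z) = arg z. -/

import Mathlib

open Complex Filter Set Topology MeasureTheory

/-- The slit plane `ℂ ∖ [0,+∞)`. -/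
def SlitP : Set ℂ := {z : ℂ | z.re < 0 ∨ z.im ≠ 0}

/-- The moment generating function `ψ_μ(z) = ∫ zt/(1 − zt) dμ(t)` of a measure
supported on `[0,+∞)`. -/
noncomputable def psiP (μ : Measure ℝ) (z : ℂ) : ℂ :=
  ∫ t, (z * (t : ℂ)) / (1 - z * (t : ℂ)) ∂μ

/-- The `η`-transform `η_μ = ψ_μ/(1 + ψ_μ)`. -/
noncomputable def etaP (μ : Measure ℝ) (z : ℂ) : ℂ := psiP μ z / (1 + psiP μ z)

/-!
The two conditions on `η` say that `η z` lies in the cone spanned by `z` and `-1`. Substituting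
`z = -s ^ 2`, this makes `s * (1 - η (-s ^ 2))⁻¹` a function with nonnegative real part on the
right half-plane. The Cayley transform turns Herglotz' theorem on the disc into a formula
`(1 - η z)⁻¹ = ∫ ((1 - u) - u z)⁻¹ dν(u)` over the unit interval, and `η(0-) = 0` says that
`(1 - u)⁻¹ dν(u)` is a probability measure; its image under `t = u / (1 - u)` is the `μ` with
`1 + ψ_μ = (1 - η)⁻¹`, i.e. `η_μ = η`.

Conversely, `Im (η_μ(z) conj z)` is a positive multiple of the Cauchy–Schwarz defect of the
functions `1` and `t` for the measure `|1 - z t|⁻² dμ(t)`. It is nonnegative, and vanishes only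
when `t` is constant `μ`-almost everywhere.
-/

open ComplexConjugate

section SlitPlane

theorem mem_slitP {z : ℂ} : z ∈ SlitP ↔ z.re < 0 ∨ z.im ≠ 0 := Iff.rfl

theorem isOpen_slitP : IsOpen SlitP :=
  (isOpen_lt continuous_re continuous_const).union (isOpen_ne_fun continuous_im continuous_const)

theorem ofReal_mem_slitP {x : ℝ} : (x : ℂ) ∈ SlitP ↔ x < 0 := by
  simp only [mem_slitP, ofReal_re, ofReal_im, ne_eq, not_true_eq_false, or_false]

theorem neg_sq_mem_slitP {s : ℂ} : -s ^ 2 ∈ SlitP ↔ s.re ≠ 0 := by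
  have hre : (-s ^ 2).re = s.im ^ 2 - s.re ^ 2 := by
    simp only [pow_two, neg_re, mul_re]
    ring
  have him : (-s ^ 2).im = -(2 * s.re * s.im) := by
    simp only [pow_two, neg_im, mul_im]
    ring
  rw [mem_slitP, hre, him]
  constructor
  · rintro h hs
    rw [hs, mul_zero, zero_mul, neg_zero] at h
    exact h.elim (fun h ↦ by nlinarith [sq_nonneg s.im]) fun h ↦ h rfl
  · intro hs
    rcases eq_or_ne s.im 0 with h | h
    · left
      rw [h]
      linarith [sq_pos_of_ne_zero hs]
    · exact .inr (neg_ne_zero.2 (mul_ne_zero (mul_ne_zero two_ne_zero hs) h))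

theorem exists_eq_neg_sq_of_mem_slitP {z : ℂ} (hz : z ∈ SlitP) :
    ∃ s : ℂ, 0 < s.re ∧ z = -s ^ 2 := by
  obtain ⟨s, hs⟩ : ∃ s : ℂ, z = -s ^ 2 :=
    (IsAlgClosed.exists_pow_nat_eq (-z) two_pos).imp fun s hs ↦ by rw [hs, neg_neg]
  have hre : s.re ≠ 0 := neg_sq_mem_slitP.1 (hs ▸ hz)
  rcases hre.lt_or_gt with h | h
  · exact ⟨-s, by simpa using h, by rw [neg_sq, hs]⟩
  · exact ⟨s, h, hs⟩

end SlitPlane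

section Herglotz

open Metric Real

theorem herglotzRieszKernel_zero_left {c ζ : ℂ} (hζ : ζ ≠ c) : herglotzRieszKernel c c ζ = 1 := by
  simp [herglotzRieszKernel_def, sub_ne_zero.2 hζ]

theorem continuous_herglotzRieszKernel_coe_sphere {w : ℂ} (hw : w ∈ ball 0 1) :
    Continuous fun ξ : sphere (0 : ℂ) 1 ↦ herglotzRieszKernel 0 w ξ := by
  have hK := continuousOn_herglotzRieszKernel_sphere hw
  rw [abs_one] at hK
  exact hK.comp_continuous continuous_subtype_val Subtype.prop

theorem re_circleAverage_herglotzRieszKernel_smul_re {g : ℂ → ℂ} {R : ℝ}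
    (hg : DiffContOnCl ℂ g (ball 0 R)) {w : ℂ} (hw : w ∈ ball 0 R) :
    (circleAverage (fun ζ ↦ herglotzRieszKernel 0 w ζ • ((g ζ).re : ℂ)) 0 R).re = (g w).re := by
  have hg_sphere : ContinuousOn g (sphere 0 |R|) := by
    simpa only [abs_of_pos (pos_of_mem_ball hw)] using
      hg.continuousOn_ball.mono sphere_subset_closedBall
  have hK : ContinuousOn (fun ζ ↦ ((herglotzRieszKernel 0 w ζ).re : ℂ)) (sphere 0 |R|) :=
    continuous_ofReal.comp_continuousOn <|
      continuous_re.comp_continuousOn (continuousOn_herglotzRieszKernel_sphere hw)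
  have hre_int : CircleIntegrable (fun ζ ↦ (g ζ).re) 0 R :=
    (continuous_re.comp_continuousOn hg_sphere).circleIntegrable'
  rw [re_circleAverage_herglotzRieszKernel_smul hre_int hw,
    ← hg.circleAverage_re_herglotzRieszKernel_smul hw]
  convert reCLM.circleAverage_comp_comm (hK.mul hg_sphere).circleIntegrable' using 2
  · ext ζ
    simp
  · rw [reCLM_apply]
    congr

theorem circleAverage_herglotzRieszKernel_zero_smul_ofReal {u : ℂ → ℝ} {R : ℝ} (hR : R ≠ 0)
    (hu : CircleIntegrable u 0 R) :
    circleAverage (fun ζ ↦ herglotzRieszKernel 0 0 ζ • (u ζ : ℂ)) 0 R = circleAverage u 0 R := by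
  calc circleAverage (fun ζ ↦ herglotzRieszKernel 0 0 ζ • (u ζ : ℂ)) 0 R
      = circleAverage (ofRealCLM ∘ u) 0 R :=
        circleAverage_congr_sphere fun ζ hζ ↦ by
          simp [herglotzRieszKernel_zero_left (ne_of_mem_sphere hζ (abs_ne_zero.2 hR))]
    _ = circleAverage u 0 R := ofRealCLM.circleAverage_comp_comm hu

theorem schwarz_integral_formula {g : ℂ → ℂ} {R : ℝ} (hg : DiffContOnCl ℂ g (ball 0 R)) {w : ℂ}
    (hw : w ∈ ball 0 R) :
    g w = circleAverage (fun ζ ↦ herglotzRieszKernel 0 w ζ • ((g ζ).re : ℂ)) 0 R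
      + (g 0).im * I := by
  have hR : 0 < R := pos_of_mem_ball hw
  have hre_cont : ContinuousOn (fun ζ ↦ (g ζ).re) (sphere 0 |R|) :=
    continuous_re.comp_continuousOn <| hg.continuousOn_ball.mono <| by
      rw [abs_of_pos hR]
      exact sphere_subset_closedBall
  set H : ℂ → ℂ := fun v ↦ circleAverage (fun ζ ↦ herglotzRieszKernel 0 v ζ • ((g ζ).re : ℂ)) 0 R
  have hH_an : AnalyticOnNhd ℂ H (ball 0 R) := analyticOnNhd_circleAverage_herglotzRieszKernel_smul
    (continuous_ofReal.comp_continuousOn hre_cont).circleIntegrable'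
  have hre : ∀ v ∈ ball (0 : ℂ) R, (g v - H v).re = 0 := fun v hv ↦ by
    rw [sub_re, re_circleAverage_herglotzRieszKernel_smul_re hg hv, sub_self]
  have hH0 : (H 0).im = 0 := by
    simp only [H]
    rw [circleAverage_herglotzRieszKernel_zero_smul_ofReal hR.ne' hre_cont.circleIntegrable',
      ofReal_im]
  obtain ⟨c, hc⟩ := ((hg.differentiableOn.analyticOnNhd isOpen_ball).sub
    hH_an).eq_re_add_const_mul_I_of_re_eq_const hre isOpen_ball (isConnected_ball hR)
  have hc0 : (g 0).im = c := by
    simpa [hH0] using congrArg im (hc 0 (mem_ball_self hR))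
  rw [hc0, ← sub_eq_iff_eq_add']
  simpa only [Pi.sub_apply, ofReal_zero, zero_add] using hc w hw

/-- Normalised arc length on the unit circle, as a measure on the sphere of `ℂ`, so that integrating
against it is taking `circleAverage`. -/
noncomputable def circleUniform : Measure (sphere (0 : ℂ) 1) :=
  ENNReal.ofReal (2 * π)⁻¹ • (volume.restrict (Ioc 0 (2 * π))).map
    fun θ ↦ ⟨circleMap 0 1 θ, circleMap_mem_sphere 0 zero_le_one θ⟩

instance : IsFiniteMeasure circleUniform :=
  Measure.smul_finite _ ENNReal.ofReal_ne_top

theorem integral_circleUniform {k : ℂ → ℂ} (hk : ContinuousOn k (sphere 0 1)) :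
    ∫ ξ, k ξ ∂circleUniform = circleAverage k 0 1 := by
  have hmeas : Measurable fun θ ↦
      (⟨circleMap 0 1 θ, circleMap_mem_sphere 0 zero_le_one θ⟩ : sphere (0 : ℂ) 1) := by
    fun_prop
  have hk' : Continuous fun ξ : sphere (0 : ℂ) 1 ↦ k ξ :=
    hk.comp_continuous continuous_subtype_val Subtype.prop
  rw [circleUniform, integral_smul_measure,
    integral_map hmeas.aemeasurable hk'.aestronglyMeasurable, circleAverage_def,
    intervalIntegral.integral_of_le two_pi_pos.le, ENNReal.toReal_ofReal (by positivity)]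

/-- The measure on the unit circle whose density with respect to normalised arc length is `Re f`
(cut off at `0` where it is negative): the representing measure of `f` in Herglotz' formula. -/
noncomputable def boundaryReMeasure (f : ℂ → ℂ) : Measure (sphere (0 : ℂ) 1) :=
  circleUniform.withDensity fun ξ ↦ ENNReal.ofReal (f ξ).re

theorem integral_boundaryReMeasure {f k : ℂ → ℂ} (hf : ContinuousOn f (sphere 0 1))
    (hre : ∀ ζ ∈ sphere (0 : ℂ) 1, 0 ≤ (f ζ).re) (hk : ContinuousOn k (sphere 0 1)) :
    ∫ ξ, k ξ ∂boundaryReMeasure f = circleAverage (fun ζ ↦ k ζ • ((f ζ).re : ℂ)) 0 1 := by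
  have hre_cont : ContinuousOn (fun ζ ↦ (f ζ).re) (sphere 0 1) := continuous_re.comp_continuousOn hf
  have hmeas : Measurable fun ξ : sphere (0 : ℂ) 1 ↦ ENNReal.ofReal (f ξ).re :=
    (hre_cont.comp_continuous continuous_subtype_val Subtype.prop).measurable.ennreal_ofReal
  rw [boundaryReMeasure, integral_withDensity_eq_integral_toReal_smul hmeas (by simp),
    ← integral_circleUniform (k := fun ζ ↦ k ζ • ((f ζ).re : ℂ))
      (hk.smul (continuous_ofReal.comp_continuousOn hre_cont))]
  refine integral_congr_ae <| .of_forall fun ξ ↦ ?_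
  simp [ENNReal.toReal_ofReal (hre ξ ξ.2), mul_comm]

theorem isFiniteMeasure_boundaryReMeasure {f : ℂ → ℂ} (hf : ContinuousOn f (sphere 0 1)) :
    IsFiniteMeasure (boundaryReMeasure f) := by
  have hre_cont : ContinuousOn (fun ζ ↦ (f ζ).re) (sphere 0 1) := continuous_re.comp_continuousOn hf
  obtain ⟨C, hC⟩ := (isCompact_sphere (0 : ℂ) 1).exists_bound_of_continuousOn hre_cont
  refine isFiniteMeasure_withDensity (ne_of_lt ?_)
  calc ∫⁻ ξ, ENNReal.ofReal (f ξ).re ∂circleUniform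
      ≤ ∫⁻ _, ENNReal.ofReal C ∂circleUniform :=
        lintegral_mono fun ξ ↦ ENNReal.ofReal_le_ofReal ((le_abs_self _).trans (hC ξ ξ.2))
    _ < ⊤ := by simp [ENNReal.mul_lt_top]

theorem exists_herglotz_measure_of_diffContOnCl {f : ℂ → ℂ} (hf : DiffContOnCl ℂ f (ball 0 1))
    (hre : ∀ ζ ∈ sphere (0 : ℂ) 1, 0 ≤ (f ζ).re) :
    ∃ ν : FiniteMeasure (sphere (0 : ℂ) 1), (ν.mass : ℝ) = (f 0).re ∧
      ∀ w ∈ ball (0 : ℂ) 1, f w =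
        ∫ ξ, herglotzRieszKernel 0 w ξ ∂(ν : Measure (sphere (0 : ℂ) 1)) + (f 0).im * I := by
  have hf_sphere := hf.continuousOn_ball.mono sphere_subset_closedBall
  let ν : FiniteMeasure (sphere (0 : ℂ) 1) :=
    ⟨boundaryReMeasure f, isFiniteMeasure_boundaryReMeasure hf_sphere⟩
  have hrep : ∀ w ∈ ball (0 : ℂ) 1,
      f w = ∫ ξ, herglotzRieszKernel 0 w ξ ∂(ν : Measure (sphere (0 : ℂ) 1)) + (f 0).im * I := by
    intro w hw
    have hK : ContinuousOn (herglotzRieszKernel 0 w) (sphere 0 1) := by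
      simpa only [abs_one] using continuousOn_herglotzRieszKernel_sphere hw
    exact (schwarz_integral_formula hf hw).trans <|
      congrArg (· + _) (integral_boundaryReMeasure hf_sphere hre hK).symm
  refine ⟨ν, ?_, hrep⟩
  have h0 := congrArg re (hrep 0 (mem_ball_self one_pos))
  have hK0 : ∀ ξ : sphere (0 : ℂ) 1, herglotzRieszKernel 0 0 ξ = 1 := fun ξ ↦
    herglotzRieszKernel_zero_left (ne_of_mem_sphere ξ.2 one_ne_zero)
  rw [integral_congr_ae (.of_forall hK0), integral_const] at h0
  simp only [add_re, real_smul, mul_one, ofReal_re, re_ofReal_mul, I_re, mul_zero, add_zero] at h0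
  exact h0.symm

theorem exists_herglotz_measure_dilation {f : ℂ → ℂ} (hf : DifferentiableOn ℂ f (ball 0 1))
    (hre : ∀ w ∈ ball (0 : ℂ) 1, 0 ≤ (f w).re) {r : ℝ} (hr : r ∈ Ioo 0 1) :
    ∃ ν : FiniteMeasure (sphere (0 : ℂ) 1), (ν.mass : ℝ) = (f 0).re ∧ ∀ w ∈ ball (0 : ℂ) 1,
      f (r * w) = ∫ ξ, herglotzRieszKernel 0 w ξ ∂(ν : Measure (sphere (0 : ℂ) 1))
        + (f 0).im * I := by
  have hmaps : MapsTo (fun w : ℂ ↦ (r : ℂ) * w) (closedBall 0 1) (ball 0 1) := by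
    intro w hw
    simp only [mem_closedBall, mem_ball, dist_zero_right, norm_mul, norm_real,
      Real.norm_of_nonneg hr.1.le] at hw ⊢
    nlinarith [hr.1, hr.2]
  have hd : DifferentiableOn ℂ (fun w ↦ f (r * w)) (closedBall 0 1) :=
    hf.comp (by fun_prop) hmaps
  simpa using exists_herglotz_measure_of_diffContOnCl (hd.diffContOnCl_ball subset_rfl)
    fun ζ hζ ↦ hre _ (hmaps (sphere_subset_closedBall hζ))

/-- The measures of the dilations `f (r * w)` all have mass `(f 0).re`, so they have a weak limit
point as `r → 1`. -/
theorem exists_herglotz_measure {f : ℂ → ℂ} (hf : DifferentiableOn ℂ f (ball 0 1))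
    (hre : ∀ w ∈ ball (0 : ℂ) 1, 0 ≤ (f w).re) :
    ∃ ν : FiniteMeasure (sphere (0 : ℂ) 1), ∀ w ∈ ball (0 : ℂ) 1,
      f w = ∫ ξ, herglotzRieszKernel 0 w ξ ∂(ν : Measure (sphere (0 : ℂ) 1)) + (f 0).im * I := by
  have hdil := fun r hr ↦ exists_herglotz_measure_dilation hf hre (r := r) hr
  choose! ν hmass hrep using hdil
  let 𝒰 := Ultrafilter.of (𝓝[<] (1 : ℝ))
  have h𝒰 : (𝒰 : Filter ℝ) ≤ 𝓝[<] 1 := Ultrafilter.of_le _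
  have hIoo : ∀ᶠ r in (𝒰 : Filter ℝ), r ∈ Ioo (0 : ℝ) 1 := h𝒰 (Ioo_mem_nhdsLT one_pos)
  have hcompact := isCompact_setOfPred_finiteMeasure_eq_of_compactSpace (sphere (0 : ℂ) 1)
    ⟨(f 0).re, hre 0 (mem_ball_self one_pos)⟩
  obtain ⟨ν₀, -, hν₀⟩ := hcompact.ultrafilter_le_nhds (𝒰.map ν) <|
    le_principal_iff.2 (hIoo.mono fun r hr ↦ NNReal.eq (hmass r hr))
  refine ⟨ν₀, fun w hw ↦ ?_⟩
  have hlim_int := (FiniteMeasure.tendsto_iff_forall_integral_rclike_tendsto ℂ).1 hν₀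
    (BoundedContinuousFunction.mkOfCompact ⟨_, continuous_herglotzRieszKernel_coe_sphere hw⟩)
  have hlim_f : Tendsto (fun r : ℝ ↦ f (r * w)) 𝒰 (𝓝 (f w)) := by
    have hmul : Tendsto (fun r : ℝ ↦ (r : ℂ) * w) 𝒰 (𝓝 w) := by
      have : Tendsto (fun r : ℝ ↦ (r : ℂ) * w) (𝓝 1) (𝓝 (((1 : ℝ) : ℂ) * w)) :=
        Continuous.tendsto (by fun_prop) 1
      simpa using this.mono_left (h𝒰.trans nhdsWithin_le_nhds)
    exact (hf.continuousOn.continuousAt (isOpen_ball.mem_nhds hw)).tendsto.comp hmul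
  refine tendsto_nhds_unique hlim_f ((hlim_int.add_const ((f 0).im * I)).congr' ?_)
  exact hIoo.mono fun r hr ↦ (hrep r hr w hw).symm

theorem herglotzRieszKernel_add_conj {w ξ : ℂ} (hξ : ‖ξ‖ = 1) (hw : ‖w‖ < 1) :
    herglotzRieszKernel 0 w ξ + conj (herglotzRieszKernel 0 (conj w) ξ) =
      2 * ((1 - w ^ 2) / (1 - 2 * ξ.re * w + w ^ 2)) := by
  have hsub : ξ - w ≠ 0 := by
    rintro h
    rw [sub_eq_zero.1 h] at hξ
    exact hw.ne hξ
  have hsub' : conj ξ - w ≠ 0 := by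
    rintro h
    rw [← norm_conj, sub_eq_zero.1 h] at hξ
    exact hw.ne hξ
  have hnorm : ξ * conj ξ = 1 := by rw [mul_conj', hξ]; norm_num
  have hre : (2 * ξ.re : ℂ) = ξ + conj ξ := by rw [add_conj]; norm_num
  have hden : 1 - 2 * ξ.re * w + w ^ 2 = (ξ - w) * (conj ξ - w) := by
    rw [hre]; linear_combination -hnorm
  rw [hden]
  simp only [herglotzRieszKernel_def, sub_zero, map_div₀, map_add, map_sub, conj_conj]
  field_simp
  linear_combination 2 * hnorm

/-- Averaging the Herglotz formulas at `w` and at `conj w` leaves a kernel which depends on the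
boundary point only through its real part. -/
theorem exists_herglotz_measure_of_conj {f : ℂ → ℂ} (hf : DifferentiableOn ℂ f (ball 0 1))
    (hre : ∀ w ∈ ball (0 : ℂ) 1, 0 ≤ (f w).re)
    (hconj : ∀ w ∈ ball (0 : ℂ) 1, f (conj w) = conj (f w)) :
    ∃ ν : FiniteMeasure (sphere (0 : ℂ) 1), ∀ w ∈ ball (0 : ℂ) 1,
      f w = ∫ ξ : sphere (0 : ℂ) 1, (1 - w ^ 2) / (1 - 2 * (ξ : ℂ).re * w + w ^ 2) ∂ν := by
  obtain ⟨ν, hν⟩ := exists_herglotz_measure hf hre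
  have him0 : (f 0).im = 0 := conj_eq_iff_im.1 <| by
    simpa using (hconj 0 (mem_ball_self one_pos)).symm
  refine ⟨ν, fun w hw ↦ ?_⟩
  have hw' : conj w ∈ ball (0 : ℂ) 1 := by simpa using hw
  have hint {k : sphere (0 : ℂ) 1 → ℂ} (hk : Continuous k) : Integrable k ν :=
    hk.integrable_of_hasCompactSupport (.of_compactSpace k)
  have hK := continuous_herglotzRieszKernel_coe_sphere hw
  have hK' := continuous_conj.comp (continuous_herglotzRieszKernel_coe_sphere hw')
  have hrep : f w = ∫ ξ, herglotzRieszKernel 0 w ξ ∂(ν : Measure (sphere (0 : ℂ) 1)) := by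
    simpa [him0] using hν w hw
  have hrep' : f w =
      ∫ ξ, conj (herglotzRieszKernel 0 (conj w) ξ) ∂(ν : Measure (sphere (0 : ℂ) 1)) := by
    rw [integral_conj, ← conj_conj (f w), ← hconj w hw]
    simpa [him0] using congrArg conj (hν _ hw')
  refine mul_left_cancel₀ (two_ne_zero (α := ℂ)) ?_
  calc 2 * f w
      = ∫ ξ, herglotzRieszKernel 0 w ξ ∂(ν : Measure (sphere (0 : ℂ) 1)) +
          ∫ ξ, conj (herglotzRieszKernel 0 (conj w) ξ) ∂(ν : Measure (sphere (0 : ℂ) 1)) :=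
        (two_mul _).trans (congrArg₂ (· + ·) hrep hrep')
    _ = ∫ ξ : sphere (0 : ℂ) 1,
          2 * ((1 - w ^ 2) / (1 - 2 * (ξ : ℂ).re * w + w ^ 2)) ∂ν := by
        refine (integral_add (hint hK) (hint hK')).symm.trans ?_
        exact integral_congr_ae <| .of_forall fun ξ ↦
          herglotzRieszKernel_add_conj (mem_sphere_zero_iff_norm.1 ξ.2) (mem_ball_zero_iff.1 hw)
    _ = 2 * ∫ ξ : sphere (0 : ℂ) 1, (1 - w ^ 2) / (1 - 2 * (ξ : ℂ).re * w + w ^ 2) ∂ν :=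
        integral_const_mul _ _

end Herglotz

section Cayley

/-- The Cayley transform, an involution of the sphere which exchanges the right half-plane and the
unit disc. -/
noncomputable def cayley (s : ℂ) : ℂ := (1 - s) / (1 + s)

theorem normSq_one_add_sub_normSq_one_sub (s : ℂ) :
    normSq (1 + s) - normSq (1 - s) = 4 * s.re := by
  simp only [normSq_apply, add_re, sub_re, add_im, sub_im, one_re, one_im]
  ring

theorem one_add_ne_zero_of_re_pos {s : ℂ} (hs : 0 < s.re) : 1 + s ≠ 0 := fun h ↦ by
  have := congrArg re h
  simp only [add_re, one_re, zero_re] at this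
  linarith

theorem one_add_ne_zero_of_norm_lt_one {w : ℂ} (hw : ‖w‖ < 1) : 1 + w ≠ 0 := fun h ↦ by
  rw [← norm_neg, ← eq_neg_of_add_eq_zero_left h, norm_one] at hw
  exact hw.false

theorem norm_cayley_lt_one {s : ℂ} (hs : 0 < s.re) : ‖cayley s‖ < 1 := by
  have hpos := norm_pos_iff.2 (one_add_ne_zero_of_re_pos hs)
  rw [cayley, norm_div, div_lt_one hpos, ← sq_lt_sq₀ (norm_nonneg _) hpos.le,
    ← normSq_eq_norm_sq, ← normSq_eq_norm_sq]
  linarith [normSq_one_add_sub_normSq_one_sub s]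

theorem cayley_cayley {s : ℂ} (hs : 1 + s ≠ 0) : cayley (cayley s) = s := by
  have h : 1 + (1 - s) / (1 + s) = 2 / (1 + s) := by field_simp; ring
  rw [cayley, cayley, h]
  field_simp
  ring

theorem cayley_re_pos {w : ℂ} (hw : ‖w‖ < 1) : 0 < (cayley w).re := by
  have hre : (cayley w).re = (1 - normSq w) / normSq (1 + w) := by
    rw [cayley, div_re, ← add_div, normSq_apply w]
    simp only [sub_re, sub_im, add_re, add_im, one_re, one_im]
    ring
  rw [hre, normSq_eq_norm_sq w]
  exact div_pos (by nlinarith [norm_nonneg w])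
    (normSq_pos.2 (one_add_ne_zero_of_norm_lt_one hw))

theorem conj_cayley (w : ℂ) : conj (cayley w) = cayley (conj w) := by
  simp [cayley]

theorem differentiableOn_cayley : DifferentiableOn ℂ cayley (Metric.ball 0 1) :=
  DifferentiableOn.div (by fun_prop) (by fun_prop)
    fun _ hw ↦ one_add_ne_zero_of_norm_lt_one (mem_ball_zero_iff.1 hw)

end Cayley
section Stieltjes

open Metric unitInterval

theorem cayley_kernel {s : ℂ} (hs : 1 + s ≠ 0) (c : ℝ) :
    (1 - cayley s ^ 2) / (1 - 2 * c * cayley s + cayley s ^ 2) =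
      s * (1 / ((1 - ((1 + c) / 2 : ℝ)) - ((1 + c) / 2 : ℝ) * (-s ^ 2))) := by
  have hnum : 1 - cayley s ^ 2 = (2 / (1 + s)) ^ 2 * s := by
    rw [cayley]; field_simp; ring
  have hden : 1 - 2 * c * cayley s + cayley s ^ 2 = (2 / (1 + s)) ^ 2 *
      ((1 - ((1 + c) / 2 : ℝ)) - ((1 + c) / 2 : ℝ) * (-s ^ 2)) := by
    rw [cayley]; push_cast; field_simp; ring
  rw [hnum, hden, mul_div_mul_left _ _ (pow_ne_zero 2 (div_ne_zero two_ne_zero hs)), mul_one_div]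

theorem exists_measure_unitInterval {F : ℂ → ℂ} (hF : DifferentiableOn ℂ F SlitP)
    (hconj : ∀ z ∈ SlitP, F (conj z) = conj (F z))
    (hre : ∀ s : ℂ, 0 < s.re → 0 ≤ (s * F (-s ^ 2)).re) :
    ∃ ν : Measure I, IsFiniteMeasure ν ∧
      ∀ z ∈ SlitP, F z = ∫ u : I, 1 / ((1 - u) - u * z) ∂ν := by
  set f : ℂ → ℂ := fun w ↦ cayley w * F (-cayley w ^ 2)
  have hmaps : MapsTo (fun w ↦ -cayley w ^ 2) (ball 0 1) SlitP := fun w hw ↦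
    neg_sq_mem_slitP.2 (cayley_re_pos (mem_ball_zero_iff.1 hw)).ne'
  have hf : DifferentiableOn ℂ f (ball 0 1) :=
    differentiableOn_cayley.mul (hF.comp (differentiableOn_cayley.pow 2).neg hmaps)
  have hf_conj : ∀ w ∈ ball (0 : ℂ) 1, f (conj w) = conj (f w) := by
    intro w hw
    simp only [f, ← conj_cayley, map_mul, ← hconj _ (hmaps hw), map_neg, map_pow]
  obtain ⟨ν, hν⟩ := exists_herglotz_measure_of_conj hf
    (fun w hw ↦ hre _ (cayley_re_pos (mem_ball_zero_iff.1 hw))) hf_conj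
  let p : sphere (0 : ℂ) 1 → I := fun ξ ↦ ⟨(1 + (ξ : ℂ).re) / 2, by
    have := abs_le.1 ((abs_re_le_norm ξ).trans (mem_sphere_zero_iff_norm.1 ξ.2).le)
    constructor <;> linarith⟩
  have hp : Measurable p := by fun_prop
  refine ⟨(ν : Measure (sphere (0 : ℂ) 1)).map p, inferInstance, fun z hz ↦ ?_⟩
  obtain ⟨s, hs, rfl⟩ := exists_eq_neg_sq_of_mem_slitP hz
  have hs1 := one_add_ne_zero_of_re_pos hs
  have hs0 : s ≠ 0 := by rintro rfl; simp at hs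
  rw [integral_map hp.aemeasurable (Measurable.aestronglyMeasurable (by fun_prop))]
  refine mul_left_cancel₀ hs0 ?_
  have := hν (cayley s) (mem_ball_zero_iff.2 (norm_cayley_lt_one hs))
  simp only [f, cayley_cayley hs1] at this
  rw [this, ← integral_const_mul]
  exact integral_congr_ae <| .of_forall fun ξ ↦ cayley_kernel hs1 _

end Stieltjes

section TotalMass

open unitInterval

theorem one_sub_sub_mul_pos (u : I) {x : ℝ} (hx : x < 0) : 0 < 1 - (u : ℝ) - u * x := by
  rcases u.2.1.eq_or_lt with h | h
  · simp [← h]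
  · nlinarith [u.2.2]

theorem integrable_one_sub_sub_mul_inv (ν : Measure I) [IsFiniteMeasure ν] {x : ℝ} (hx : x < 0) :
    Integrable (fun u : I ↦ (1 - (u : ℝ) - u * x)⁻¹) ν :=
  Continuous.integrable_of_hasCompactSupport
    (Continuous.inv₀ (by fun_prop) fun u ↦ (one_sub_sub_mul_pos u hx).ne') (.of_compactSpace _)

theorem lintegral_inv_one_sub {ν : Measure I} [IsFiniteMeasure ν] {L : ℝ}
    (hL : Tendsto (fun x : ℝ ↦ ∫ u : I, (1 - (u : ℝ) - u * x)⁻¹ ∂ν) (𝓝[<] 0) (𝓝 L)) :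
    ∫⁻ u : I, (ENNReal.ofReal (1 - u))⁻¹ ∂ν = ENNReal.ofReal L := by
  obtain ⟨x, hx_mono, hx_neg, hx_lim⟩ := exists_seq_strictMono_tendsto_nhdsWithin (0 : ℝ)
  have hlintegral : ∀ n, ∫⁻ u : I, (ENNReal.ofReal (1 - u - u * x n))⁻¹ ∂ν =
      ENNReal.ofReal (∫ u : I, (1 - (u : ℝ) - u * x n)⁻¹ ∂ν) := by
    intro n
    rw [ofReal_integral_eq_lintegral_ofReal (integrable_one_sub_sub_mul_inv ν (hx_neg n))
      (.of_forall fun u ↦ (inv_pos.2 (one_sub_sub_mul_pos u (hx_neg n))).le)]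
    exact lintegral_congr fun u ↦
      (ENNReal.ofReal_inv_of_pos (one_sub_sub_mul_pos u (hx_neg n))).symm
  refine tendsto_nhds_unique ?_ (ENNReal.tendsto_ofReal (hL.comp hx_lim))
  refine (lintegral_tendsto_of_tendsto_of_monotone (fun n ↦ by fun_prop)
    (.of_forall fun u m n hmn ↦ ?_) (.of_forall fun u ↦ ?_)).congr hlintegral
  · exact ENNReal.inv_le_inv.2 <| ENNReal.ofReal_le_ofReal <|
      sub_le_sub_left (mul_le_mul_of_nonneg_left (hx_mono.monotone hmn) u.2.1) _
  · have : Tendsto (fun n ↦ 1 - (u : ℝ) - u * x n) atTop (𝓝 (1 - u - u * 0)) :=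
      (hx_lim.mono_right nhdsWithin_le_nhds).const_mul _ |>.const_sub _
    rw [mul_zero, sub_zero] at this
    exact (ENNReal.tendsto_ofReal this).inv

theorem integral_one_div_one_sub_sub_mul_ofReal (ν : Measure I) (x : ℝ) :
    ∫ u : I, 1 / ((1 - u) - u * x : ℂ) ∂ν = (∫ u : I, (1 - (u : ℝ) - u * x)⁻¹ ∂ν : ℝ) := by
  refine Eq.trans ?_ integral_ofReal
  simp

/-- The measure `(1 - u)⁻¹ dν(u)` on `[0,1]`, carried to the half-line by `t = u / (1 - u)`. The
density is infinite at `u = 1`, where `t` takes the junk value `0`; this is harmless when the total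
mass is finite, since then `ν {1} = 0`. -/
noncomputable def halflineMeasure (ν : Measure I) : Measure ℝ :=
  (ν.withDensity fun u : I ↦ (ENNReal.ofReal (1 - u))⁻¹).map fun u : I ↦ (u : ℝ) / (1 - u)

theorem halflineMeasure_Iio_zero (ν : Measure I) : halflineMeasure ν (Iio 0) = 0 := by
  rw [halflineMeasure, Measure.map_apply (by fun_prop) measurableSet_Iio]
  have hempty : (fun u : I ↦ (u : ℝ) / (1 - u)) ⁻¹' Iio 0 = ∅ :=
    eq_empty_of_forall_notMem fun u hu ↦ not_lt.2 (div_nonneg u.2.1 (sub_nonneg.2 u.2.2)) hu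
  rw [hempty, measure_empty]

theorem isProbabilityMeasure_halflineMeasure {ν : Measure I}
    (hν : ∫⁻ u : I, (ENNReal.ofReal (1 - u))⁻¹ ∂ν = 1) :
    IsProbabilityMeasure (halflineMeasure ν) := by
  have : IsProbabilityMeasure (ν.withDensity fun u : I ↦ (ENNReal.ofReal (1 - u))⁻¹) :=
    ⟨by rwa [withDensity_apply _ .univ, setLIntegral_univ]⟩
  exact Measure.isProbabilityMeasure_map (Measurable.aemeasurable (by fun_prop))

theorem integral_halflineMeasure {ν : Measure I}
    (hν : ∫⁻ u : I, (ENNReal.ofReal (1 - u))⁻¹ ∂ν ≠ ⊤) (z : ℂ) :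
    ∫ t : ℝ, 1 / (1 - z * t) ∂halflineMeasure ν = ∫ u : I, 1 / ((1 - u) - u * z) ∂ν := by
  have hρ : Measurable fun u : I ↦ (ENNReal.ofReal (1 - u))⁻¹ := by fun_prop
  have hρ_lt_top := ae_lt_top hρ hν
  rw [halflineMeasure, integral_map (Measurable.aemeasurable (by fun_prop))
    (Measurable.aestronglyMeasurable (by fun_prop)),
    integral_withDensity_eq_integral_toReal_smul hρ hρ_lt_top]
  refine integral_congr_ae (hρ_lt_top.mono fun u hu ↦ ?_)
  have hu1 : 0 < 1 - (u : ℝ) := by simpa [ENNReal.inv_lt_top] using hu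
  have hu1' : (1 - u : ℂ) ≠ 0 := mod_cast hu1.ne'
  simp only [ENNReal.toReal_inv, ENNReal.toReal_ofReal hu1.le, real_smul]
  push_cast
  rw [inv_mul_eq_div, div_div]
  congr 1
  field_simp

theorem exists_measure_halfline {F : ℂ → ℂ} (hF : DifferentiableOn ℂ F SlitP)
    (hconj : ∀ z ∈ SlitP, F (conj z) = conj (F z))
    (hre : ∀ s : ℂ, 0 < s.re → 0 ≤ (s * F (-s ^ 2)).re)
    (hlim : Tendsto (fun x : ℝ ↦ F x) (𝓝[<] 0) (𝓝 1)) :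
    ∃ μ : Measure ℝ, IsProbabilityMeasure μ ∧ μ (Iio 0) = 0 ∧
      ∀ z ∈ SlitP, F z = ∫ t : ℝ, 1 / (1 - z * t) ∂μ := by
  obtain ⟨ν, hν_fin, hν⟩ := exists_measure_unitInterval hF hconj hre
  have hmass : ∫⁻ u : I, (ENNReal.ofReal (1 - u))⁻¹ ∂ν = 1 := by
    rw [← ENNReal.ofReal_one]
    refine lintegral_inv_one_sub ((continuous_re.tendsto 1).comp hlim |>.congr' ?_)
    filter_upwards [self_mem_nhdsWithin] with x hx
    rw [Function.comp_apply, hν x (ofReal_mem_slitP.2 hx), integral_one_div_one_sub_sub_mul_ofReal,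
      ofReal_re]
  exact ⟨halflineMeasure ν, isProbabilityMeasure_halflineMeasure hmass,
    halflineMeasure_Iio_zero ν, fun z hz ↦
      (hν z hz).trans (integral_halflineMeasure (hmass ▸ ENNReal.one_ne_top) z).symm⟩

end TotalMass

section Arg

theorem im_mul_conj (z w : ℂ) : (w * conj z).im = ‖z‖ * ‖w‖ * Real.sin (w.arg - z.arg) := by
  rw [Real.sin_sub, mul_im, conj_re, conj_im, ← norm_mul_cos_arg z, ← norm_mul_sin_arg z,
    ← norm_mul_cos_arg w, ← norm_mul_sin_arg w]
  ring

theorem arg_pos_and_lt_pi_iff {z : ℂ} : 0 < z.arg ∧ z.arg < Real.pi ↔ 0 < z.im := by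
  constructor
  · rintro ⟨hpos, hlt⟩
    have hz : z ≠ 0 := by
      rintro rfl
      exact hpos.ne' arg_zero
    rw [← norm_mul_sin_arg z]
    exact mul_pos (norm_pos_iff.2 hz) (Real.sin_pos_of_pos_of_lt_pi hpos hlt)
  · intro h
    exact ⟨(arg_nonneg_iff.2 h.le).lt_of_ne' fun h0 ↦ h.ne' (arg_eq_zero_iff.1 h0).2,
      arg_lt_pi_iff.2 (.inr h.ne')⟩

theorem arg_le_arg_iff {z w : ℂ} (hz : 0 < z.im) (hw : 0 < w.im) :
    z.arg ≤ w.arg ↔ 0 ≤ (w * conj z).im := by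
  have hnorm : 0 < ‖z‖ * ‖w‖ :=
    mul_pos (norm_pos_iff.2 fun h ↦ by simp [h] at hz) (norm_pos_iff.2 fun h ↦ by simp [h] at hw)
  obtain ⟨hz0, hzπ⟩ := arg_pos_and_lt_pi_iff.2 hz
  obtain ⟨hw0, hwπ⟩ := arg_pos_and_lt_pi_iff.2 hw
  rw [im_mul_conj, mul_nonneg_iff_of_pos_left hnorm]
  constructor
  · exact fun h ↦ Real.sin_nonneg_of_nonneg_of_le_pi (by linarith) (by linarith)
  · contrapose!
    exact fun h ↦ Real.sin_neg_of_neg_of_neg_pi_lt (by linarith) (by linarith)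

theorem arg_eq_arg_iff_im_mul_conj {z w : ℂ} (hz : 0 < z.im) (hw : 0 < w.im) :
    w.arg = z.arg ↔ (w * conj z).im = 0 := by
  have hswap : (z * conj w).im = -(w * conj z).im := by
    rw [← conj_im, map_mul, conj_conj, mul_comm]
  rw [le_antisymm_iff, arg_le_arg_iff hw hz, arg_le_arg_iff hz hw, hswap, neg_nonneg,
    ← le_antisymm_iff]

theorem arg_le_arg_and_lt_pi_iff {z w : ℂ} (hz : 0 < z.im) :
    z.arg ≤ w.arg ∧ w.arg < Real.pi ↔ 0 < w.im ∧ 0 ≤ (w * conj z).im := by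
  constructor
  · rintro ⟨hle, hlt⟩
    have hw := arg_pos_and_lt_pi_iff.1 ⟨(arg_pos_and_lt_pi_iff.2 hz).1.trans_le hle, hlt⟩
    exact ⟨hw, (arg_le_arg_iff hz hw).1 hle⟩
  · rintro ⟨hw, hle⟩
    exact ⟨(arg_le_arg_iff hz hw).2 hle, (arg_pos_and_lt_pi_iff.2 hw).2⟩

end Arg

section Reconstruction

theorem exists_eq_mul_sub_of_im_pos {z w : ℂ} (hz : 0 < z.im) (hw : 0 ≤ w.im)
    (hwz : 0 ≤ (w * conj z).im) : ∃ α β : ℝ, 0 ≤ α ∧ 0 ≤ β ∧ w = β * z - α := by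
  refine ⟨(w * conj z).im / z.im, w.im / z.im, div_nonneg hwz hz.le, div_nonneg hw hz.le, ?_⟩
  apply Complex.ext
  · simp only [mul_im, conj_re, conj_im, sub_re, re_ofReal_mul, ofReal_re]
    field_simp
    ring
  · simp only [sub_im, im_ofReal_mul, ofReal_im]
    field_simp
    ring

variable {η : ℂ → ℂ} (hη : ContinuousOn η SlitP)
  (hconj : ∀ z ∈ SlitP, η (conj z) = conj (η z))
  (hcone : ∀ z : ℂ, 0 < z.im → 0 ≤ (η z).im ∧ 0 ≤ (η z * conj z).im)
include hη hconj hcone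

theorem exists_eta_ofReal_eq_neg {x : ℝ} (hx : x < 0) : ∃ α : ℝ, 0 ≤ α ∧ η x = -α := by
  have him : (η x).im = 0 := conj_eq_iff_im.1 <| by
    rw [← hconj x (ofReal_mem_slitP.2 hx), conj_ofReal]
  have hlim : Tendsto (fun y : ℝ ↦ (η (x + y * I)).re) (𝓝[>] 0) (𝓝 (η x).re) := by
    have hcont := hη.continuousAt (isOpen_slitP.mem_nhds (ofReal_mem_slitP.2 hx))
    have hpath : Tendsto (fun y : ℝ ↦ (x + y * I : ℂ)) (𝓝 0) (𝓝 x) :=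
      Continuous.tendsto' (by fun_prop) _ _ (by simp)
    exact (continuous_re.tendsto _).comp
      (hcont.tendsto.comp (hpath.mono_left nhdsWithin_le_nhds))
  have hre : (η x).re ≤ 0 := by
    refine le_of_tendsto hlim (eventually_mem_nhdsWithin.mono fun y hy ↦ ?_)
    have him_pos : 0 < (x + y * I : ℂ).im := by simpa using hy
    obtain ⟨hnonneg, hle⟩ := hcone _ him_pos
    obtain ⟨α, β, hα, hβ, h⟩ := exists_eq_mul_sub_of_im_pos him_pos hnonneg hle
    rw [h]
    simp only [sub_re, re_ofReal_mul, add_re, ofReal_re, I_re, mul_zero, add_zero]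
    nlinarith
  exact ⟨-(η x).re, neg_nonneg.2 hre, Complex.ext (by simp) (by simpa using him)⟩

theorem exists_eta_eq_mul_sub {z : ℂ} (hz : z ∈ SlitP) :
    ∃ α β : ℝ, 0 ≤ α ∧ 0 ≤ β ∧ η z = β * z - α := by
  rcases lt_trichotomy z.im 0 with h | h | h
  · have h' : 0 < (conj z).im := by simpa using h
    obtain ⟨hnonneg, hle⟩ := hcone _ h'
    obtain ⟨α, β, hα, hβ, heq⟩ := exists_eq_mul_sub_of_im_pos h' hnonneg hle
    refine ⟨α, β, hα, hβ, ?_⟩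
    rw [hconj z hz] at heq
    simpa using congrArg conj heq
  · obtain ⟨x, rfl⟩ : ∃ x : ℝ, (x : ℂ) = z := ⟨z.re, Complex.ext rfl h.symm⟩
    obtain ⟨α, hα, heq⟩ := exists_eta_ofReal_eq_neg hη hconj hcone (ofReal_mem_slitP.1 hz)
    exact ⟨α, 0, hα, le_rfl, by simp [heq]⟩
  · obtain ⟨hnonneg, hle⟩ := hcone z h
    exact exists_eq_mul_sub_of_im_pos h hnonneg hle

theorem re_conj_mul_one_sub_eta_pos {s : ℂ} (hs : 0 < s.re) :
    0 < (conj s * (1 - η (-s ^ 2))).re := by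
  obtain ⟨α, β, hα, hβ, heq⟩ := exists_eta_eq_mul_sub hη hconj hcone (neg_sq_mem_slitP.2 hs.ne')
  have : conj s * (1 - η (-s ^ 2)) = ((1 + α : ℝ) : ℂ) * conj s + (β * normSq s : ℝ) * s := by
    rw [heq]
    push_cast
    rw [normSq_eq_conj_mul_self]
    ring
  rw [this, add_re, re_ofReal_mul, re_ofReal_mul, conj_re]
  have := normSq_nonneg s
  positivity

theorem one_sub_eta_ne_zero {z : ℂ} (hz : z ∈ SlitP) : 1 - η z ≠ 0 := by
  obtain ⟨s, hs, rfl⟩ := exists_eq_neg_sq_of_mem_slitP hz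
  intro h
  simpa [h] using re_conj_mul_one_sub_eta_pos hη hconj hcone hs

theorem re_mul_inv_one_sub_eta_nonneg {s : ℂ} (hs : 0 < s.re) :
    0 ≤ (s * (1 - η (-s ^ 2))⁻¹).re := by
  have h := re_conj_mul_one_sub_eta_pos hη hconj hcone hs
  set v := 1 - η (-s ^ 2)
  have : (s * v⁻¹).re = (conj s * v).re / normSq v := by
    simp only [mul_re, inv_re, inv_im, conj_re, conj_im]
    ring
  rw [this]
  exact div_nonneg h.le (normSq_nonneg v)

end Reconstruction

section Transform

theorem ae_nonneg_of_measure_Iio_eq_zero {μ : Measure ℝ} (h : μ (Iio 0) = 0) :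
    ∀ᵐ t ∂μ, 0 ≤ t := by
  rw [ae_iff]
  simp_rw [not_le]
  exact h

theorem eq_dirac_of_ae_eq {μ : Measure ℝ} [IsProbabilityMeasure μ] {c : ℝ}
    (h : ∀ᵐ t ∂μ, t = c) : μ = Measure.dirac c := by
  calc μ = μ.map id := Measure.map_id.symm
    _ = μ.map fun _ ↦ c := Measure.map_congr h
    _ = Measure.dirac c := by rw [Measure.map_const, measure_univ, one_smul]

theorem abs_im_le_norm_mul_norm_one_sub (z : ℂ) (t : ℝ) : |z.im| ≤ ‖z‖ * ‖1 - z * t‖ := by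
  have him : (conj z * (1 - z * t)).im = -z.im := by
    simp only [mul_im, mul_re, conj_re, conj_im, sub_re, sub_im, one_re, one_im, ofReal_re,
      ofReal_im]
    ring
  simpa only [him, abs_neg, norm_mul, norm_conj] using abs_im_le_norm (conj z * (1 - z * t))

theorem one_sub_mul_ofReal_ne_zero {z : ℂ} (hz : z.im ≠ 0) (t : ℝ) : 1 - z * t ≠ 0 := by
  intro h
  have := abs_im_le_norm_mul_norm_one_sub z t
  rw [h, norm_zero, mul_zero] at this
  exact hz (abs_nonpos_iff.1 this)

theorem exists_pos_le_norm_one_sub {z : ℂ} (hz : z ∈ SlitP) :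
    ∃ δ : ℝ, 0 < δ ∧ ∀ t : ℝ, 0 ≤ t → δ ≤ ‖1 - z * t‖ := by
  rcases hz with hre | him
  · refine ⟨1, one_pos, fun t ht ↦ le_trans ?_ (re_le_norm _)⟩
    rw [sub_re, one_re, re_mul_ofReal]
    nlinarith
  · have hz0 : 0 < ‖z‖ := norm_pos_iff.2 fun h ↦ him (by rw [h, zero_im])
    exact ⟨|z.im| / ‖z‖, div_pos (abs_pos.2 him) hz0, fun t _ ↦
      (div_le_iff₀' hz0).2 (abs_im_le_norm_mul_norm_one_sub z t)⟩

theorem one_add_psiP {μ : Measure ℝ} [IsProbabilityMeasure μ] (hμ : μ (Iio 0) = 0) {z : ℂ}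
    (hz : z ∈ SlitP) : 1 + psiP μ z = ∫ t : ℝ, 1 / (1 - z * t) ∂μ := by
  obtain ⟨δ, hδ, hbound⟩ := exists_pos_le_norm_one_sub hz
  have hnonneg := ae_nonneg_of_measure_Iio_eq_zero hμ
  have hint : Integrable (fun t : ℝ ↦ 1 / (1 - z * t)) μ := by
    refine .of_bound (Measurable.aestronglyMeasurable (by fun_prop)) (1 / δ)
      (hnonneg.mono fun t ht ↦ ?_)
    rw [norm_div, norm_one]
    exact one_div_le_one_div_of_le hδ (hbound t ht)
  have hpsi : psiP μ z = ∫ t : ℝ, (1 / (1 - z * t) - 1) ∂μ :=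
    integral_congr_ae <| hnonneg.mono fun t ht ↦ by
      have hne : 1 - z * t ≠ 0 := norm_pos_iff.1 (hδ.trans_le (hbound t ht))
      field_simp
      ring
  rw [hpsi, integral_sub hint (integrable_const 1), integral_const, probReal_univ, one_smul,
    add_sub_cancel]

theorem tendsto_psiP_zero {μ : Measure ℝ} [IsFiniteMeasure μ] (hμ : μ (Iio 0) = 0) :
    Tendsto (fun x : ℝ ↦ psiP μ x) (𝓝[<] 0) (𝓝 0) := by
  rw [show (0 : ℂ) = ∫ _ : ℝ, (0 : ℂ) ∂μ from (integral_zero _ _).symm]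
  refine tendsto_integral_filter_of_dominated_convergence (fun _ ↦ (1 : ℝ))
    (.of_forall fun x ↦ Measurable.aestronglyMeasurable (by fun_prop)) ?_
    (integrable_const _) (.of_forall fun t ↦ ?_)
  · filter_upwards [self_mem_nhdsWithin] with x (hx : x < 0)
    filter_upwards [ae_nonneg_of_measure_Iio_eq_zero hμ] with t ht
    have hxt : x * t ≤ 0 := mul_nonpos_of_nonpos_of_nonneg hx.le ht
    have hreal : (x * t : ℂ) / (1 - x * t) = ((x * t / (1 - x * t) : ℝ) : ℂ) := by push_cast; rfl
    rw [hreal, norm_real, norm_div, Real.norm_of_nonpos hxt, Real.norm_of_nonneg (by linarith),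
      div_le_one (by linarith)]
    linarith
  · have hcont : ContinuousAt (fun x : ℝ ↦ (x * t : ℂ) / (1 - x * t)) 0 :=
      ContinuousAt.div (by fun_prop) (by fun_prop) (by simp)
    exact tendsto_nhdsWithin_of_tendsto_nhds (by simpa using hcont.tendsto)

theorem tendsto_etaP_zero {μ : Measure ℝ} [IsFiniteMeasure μ] (hμ : μ (Iio 0) = 0) :
    Tendsto (fun x : ℝ ↦ etaP μ x) (𝓝[<] 0) (𝓝 0) := by
  have hψ := tendsto_psiP_zero hμ
  have hlim := hψ.div (hψ.const_add 1) (by simp)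
  rwa [zero_div] at hlim

theorem etaP_dirac {z : ℂ} {c : ℝ} (h : 1 - z * c ≠ 0) : etaP (Measure.dirac c) z = z * c := by
  rw [etaP, psiP, integral_dirac]
  field_simp
  ring

end Transform

section Moments

/-- The `k`-th moment of the measure `|1 - z t|⁻² dμ(t)`. The moments of order `0`, `1`, `2`
determine `ψ_μ(z)` and the imaginary parts of `η_μ(z)` and `η_μ(z) / z`. -/
noncomputable def resolventMoment (μ : Measure ℝ) (z : ℂ) (k : ℕ) : ℝ :=
  ∫ t : ℝ, t ^ k * (normSq (1 - z * t))⁻¹ ∂μ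

variable {μ : Measure ℝ} {z : ℂ}

theorem normSq_one_sub_pos (hz : z.im ≠ 0) (t : ℝ) : 0 < normSq (1 - z * t) :=
  normSq_pos.2 (one_sub_mul_ofReal_ne_zero hz t)

theorem abs_pow_mul_im_sq_le {k : ℕ} (hk : k ≤ 2) (t : ℝ) :
    |t ^ k| * z.im ^ 2 ≤ (1 + ‖z‖ ^ 2) * normSq (1 - z * t) := by
  have hpow : |t ^ k| ≤ 1 + t ^ 2 := by
    rw [abs_pow, ← sq_abs t]
    interval_cases k <;> nlinarith [abs_nonneg t]
  have hone : z.im ^ 2 ≤ ‖z‖ ^ 2 * normSq (1 - z * t) := by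
    rw [normSq_eq_norm_sq, ← mul_pow, ← sq_abs]
    exact pow_le_pow_left₀ (abs_nonneg _) (abs_im_le_norm_mul_norm_one_sub z t) 2
  have hsq : t ^ 2 * z.im ^ 2 ≤ normSq (1 - z * t) := by
    rw [normSq_apply, sub_im, one_im, im_mul_ofReal]
    nlinarith [mul_self_nonneg (1 - z * t : ℂ).re]
  nlinarith [mul_le_mul_of_nonneg_right hpow (sq_nonneg z.im)]

theorem integrable_pow_mul_inv_normSq [IsFiniteMeasure μ] (hz : z.im ≠ 0) {k : ℕ} (hk : k ≤ 2) :
    Integrable (fun t : ℝ ↦ t ^ k * (normSq (1 - z * t))⁻¹) μ := by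
  have hmeas : Measurable fun t : ℝ ↦ t ^ k * (normSq (1 - z * t))⁻¹ := by
    have := continuous_normSq.measurable
    fun_prop
  refine .of_bound hmeas.aestronglyMeasurable ((1 + ‖z‖ ^ 2) / z.im ^ 2) (.of_forall fun t ↦ ?_)
  have hpos := normSq_one_sub_pos hz t
  rw [norm_mul, Real.norm_eq_abs, norm_inv, Real.norm_of_nonneg hpos.le, ← div_eq_mul_inv,
    div_le_div_iff₀ hpos (by positivity)]
  exact abs_pow_mul_im_sq_le hk t

theorem psiP_eq_resolventMoment [IsFiniteMeasure μ] (hz : z.im ≠ 0) :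
    psiP μ z = z * resolventMoment μ z 1 - normSq z * resolventMoment μ z 2 := by
  have hkernel (t : ℝ) : z * t / (1 - z * t) =
      z * (t ^ 1 * (normSq (1 - z * t))⁻¹ : ℝ) -
        normSq z * (t ^ 2 * (normSq (1 - z * t))⁻¹ : ℝ) := by
    rw [div_eq_mul_inv, inv_def, normSq_eq_conj_mul_self (z := z)]
    simp only [map_sub, map_one, map_mul, conj_ofReal]
    push_cast
    ring
  have h₁ := integrable_pow_mul_inv_normSq (μ := μ) hz one_le_two
  have h₂ := integrable_pow_mul_inv_normSq (μ := μ) hz le_rfl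
  simp_rw [psiP, hkernel]
  refine (integral_sub (h₁.ofReal.const_mul z) (h₂.ofReal.const_mul _)).trans ?_
  rw [integral_const_mul, integral_const_mul]
  exact congrArg₂ (· - ·) (congrArg (z * ·) integral_ofReal)
    (congrArg ((normSq z : ℂ) * ·) integral_ofReal)

theorem integrable_quadratic_mul_inv_normSq [IsFiniteMeasure μ] (hz : z.im ≠ 0) (p q r : ℝ) :
    Integrable (fun t : ℝ ↦ (p + q * t + r * t ^ 2) * (normSq (1 - z * t))⁻¹) μ := by
  have h₀ := integrable_pow_mul_inv_normSq (μ := μ) hz zero_le_two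
  have h₁ := integrable_pow_mul_inv_normSq (μ := μ) hz one_le_two
  have h₂ := integrable_pow_mul_inv_normSq (μ := μ) hz le_rfl
  refine (((h₀.const_mul p).add (h₁.const_mul q)).add (h₂.const_mul r)).congr <|
    .of_forall fun t ↦ ?_
  simp only [Pi.add_apply]
  ring

theorem integral_quadratic_mul_inv_normSq [IsFiniteMeasure μ] (hz : z.im ≠ 0) (p q r : ℝ) :
    ∫ t : ℝ, (p + q * t + r * t ^ 2) * (normSq (1 - z * t))⁻¹ ∂μ =
      p * resolventMoment μ z 0 + q * resolventMoment μ z 1 + r * resolventMoment μ z 2 := by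
  have h₀ := (integrable_pow_mul_inv_normSq (μ := μ) hz zero_le_two).const_mul p
  have h₁ := (integrable_pow_mul_inv_normSq (μ := μ) hz one_le_two).const_mul q
  have h₂ := (integrable_pow_mul_inv_normSq (μ := μ) hz le_rfl).const_mul r
  simp only [resolventMoment, ← integral_const_mul]
  rw [← integral_add h₀ h₁]
  refine Eq.trans (integral_congr_ae <| .of_forall fun t ↦ ?_) (integral_add (h₀.add h₁) h₂)
  ring

theorem one_add_psiP_eq_resolventMoment [IsProbabilityMeasure μ] (hz : z.im ≠ 0) :
    1 + psiP μ z = resolventMoment μ z 0 - conj z * resolventMoment μ z 1 := by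
  have hmass : 1 = resolventMoment μ z 0 - 2 * z.re * resolventMoment μ z 1 +
      normSq z * resolventMoment μ z 2 := by
    have hone (t : ℝ) : (1 + -2 * z.re * t + normSq z * t ^ 2) * (normSq (1 - z * t))⁻¹ = 1 := by
      have hexpand : 1 + -2 * z.re * t + normSq z * t ^ 2 = normSq (1 - z * t) := by
        simp only [normSq_apply, sub_re, sub_im, one_re, one_im, re_mul_ofReal, im_mul_ofReal]
        ring
      rw [hexpand, mul_inv_cancel₀ (normSq_one_sub_pos hz t).ne']
    have hint := integral_quadratic_mul_inv_normSq (μ := μ) hz 1 (-2 * z.re) (normSq z)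
    simp_rw [hone] at hint
    rw [integral_const, probReal_univ, one_smul] at hint
    linear_combination hint
  rw [psiP_eq_resolventMoment hz, ← ofReal_one, hmass]
  have hre := add_conj z
  push_cast at hre ⊢
  linear_combination (resolventMoment μ z 1 : ℂ) * hre

theorem im_div_one_add (w : ℂ) : (w / (1 + w)).im = w.im / normSq (1 + w) := by
  simp only [div_im, add_re, add_im, one_re, one_im]
  ring

theorem im_psiP [IsFiniteMeasure μ] (hz : z.im ≠ 0) :
    (psiP μ z).im = z.im * resolventMoment μ z 1 := by
  rw [psiP_eq_resolventMoment hz, sub_im, im_mul_ofReal, ← ofReal_mul, ofReal_im, sub_zero]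

theorem im_etaP_mul_conj [IsProbabilityMeasure μ] (hz : z.im ≠ 0) :
    (etaP μ z * conj z).im = z.im * normSq z / normSq (1 + psiP μ z) *
      (resolventMoment μ z 0 * resolventMoment μ z 2 - resolventMoment μ z 1 ^ 2) := by
  have hnum : (psiP μ z * conj (1 + psiP μ z) * conj z).im = z.im * normSq z *
      (resolventMoment μ z 0 * resolventMoment μ z 2 - resolventMoment μ z 1 ^ 2) := by
    rw [one_add_psiP_eq_resolventMoment hz, psiP_eq_resolventMoment hz]
    simp only [map_sub, map_mul, conj_ofReal, conj_conj, mul_im, mul_re, sub_re, sub_im,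
      conj_re, conj_im, ofReal_re, ofReal_im, normSq_apply]
    ring
  rw [etaP, div_eq_mul_inv, inv_def, ← mul_assoc, mul_right_comm, im_mul_ofReal, hnum]
  ring

theorem integrable_sub_sq_mul_inv_normSq [IsFiniteMeasure μ] (hz : z.im ≠ 0) (r : ℝ) :
    Integrable (fun t : ℝ ↦ (t - r) ^ 2 * (normSq (1 - z * t))⁻¹) μ :=
  (integrable_quadratic_mul_inv_normSq hz (r ^ 2) (-2 * r) 1).congr <| .of_forall fun t ↦ by ring

theorem resolventMoment_zero_pos [IsProbabilityMeasure μ] (hz : z.im ≠ 0) :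
    0 < resolventMoment μ z 0 := by
  have hpos (t : ℝ) : 0 < t ^ 0 * (normSq (1 - z * t))⁻¹ := by
    rw [pow_zero, one_mul]
    exact inv_pos.2 (normSq_one_sub_pos hz t)
  refine (integral_pos_iff_support_of_nonneg (fun t ↦ (hpos t).le)
    (integrable_pow_mul_inv_normSq hz zero_le_two)).2 ?_
  rw [Function.support_eq_univ fun t ↦ (hpos t).ne', measure_univ]
  exact one_pos

theorem resolventMoment_one_pos [IsProbabilityMeasure μ] (hz : z.im ≠ 0) (hμ : μ (Iio 0) = 0)
    (hμ0 : μ ≠ Measure.dirac 0) : 0 < resolventMoment μ z 1 := by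
  have hnonneg : 0 ≤ᵐ[μ] fun t : ℝ ↦ t ^ 1 * (normSq (1 - z * t))⁻¹ :=
    (ae_nonneg_of_measure_Iio_eq_zero hμ).mono fun t ht ↦
      mul_nonneg (pow_nonneg ht 1) (inv_nonneg.2 (normSq_nonneg _))
  refine (integral_nonneg_of_ae hnonneg).lt_of_ne' fun h ↦ hμ0 (eq_dirac_of_ae_eq ?_)
  filter_upwards [(integral_eq_zero_iff_of_nonneg_ae hnonneg
    (integrable_pow_mul_inv_normSq hz one_le_two)).1 h] with t ht
  simpa only [Pi.zero_apply, mul_eq_zero, inv_eq_zero, (normSq_one_sub_pos hz t).ne', or_false,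
    pow_one] using ht

theorem exists_sub_sq_eq_mul_integral [IsProbabilityMeasure μ] (hz : z.im ≠ 0) :
    ∃ r : ℝ, resolventMoment μ z 0 * resolventMoment μ z 2 - resolventMoment μ z 1 ^ 2 =
      resolventMoment μ z 0 * ∫ t : ℝ, (t - r) ^ 2 * (normSq (1 - z * t))⁻¹ ∂μ := by
  have hne := (resolventMoment_zero_pos (μ := μ) hz).ne'
  set r := resolventMoment μ z 1 / resolventMoment μ z 0 with hr
  have hquad : ∫ t : ℝ, (t - r) ^ 2 * (normSq (1 - z * t))⁻¹ ∂μ =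
      ∫ t : ℝ, (r ^ 2 + -2 * r * t + 1 * t ^ 2) * (normSq (1 - z * t))⁻¹ ∂μ :=
    integral_congr_ae <| .of_forall fun t ↦ by ring
  refine ⟨r, ?_⟩
  rw [hquad, integral_quadratic_mul_inv_normSq hz, hr]
  field_simp
  ring

theorem resolventMoment_one_sq_le [IsProbabilityMeasure μ] (hz : z.im ≠ 0) :
    resolventMoment μ z 1 ^ 2 ≤ resolventMoment μ z 0 * resolventMoment μ z 2 := by
  obtain ⟨r, hr⟩ := exists_sub_sq_eq_mul_integral (μ := μ) hz
  rw [← sub_nonneg, hr]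
  exact mul_nonneg (resolventMoment_zero_pos hz).le <| integral_nonneg fun t ↦
    mul_nonneg (sq_nonneg _) (inv_nonneg.2 (normSq_nonneg _))

theorem exists_eq_dirac_of_resolventMoment_one_sq_eq [IsProbabilityMeasure μ] (hz : z.im ≠ 0)
    (h : resolventMoment μ z 0 * resolventMoment μ z 2 - resolventMoment μ z 1 ^ 2 = 0) :
    ∃ c : ℝ, μ = Measure.dirac c := by
  obtain ⟨r, hr⟩ := exists_sub_sq_eq_mul_integral (μ := μ) hz
  refine ⟨r, eq_dirac_of_ae_eq ?_⟩
  have hzero : ∫ t : ℝ, (t - r) ^ 2 * (normSq (1 - z * t))⁻¹ ∂μ = 0 := by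
    rw [h, zero_eq_mul] at hr
    exact hr.resolve_left (resolventMoment_zero_pos hz).ne'
  have hae := (integral_eq_zero_iff_of_nonneg
    (fun t ↦ mul_nonneg (sq_nonneg _) (inv_nonneg.2 (normSq_nonneg _)))
    (integrable_sub_sq_mul_inv_normSq hz r)).1 hzero
  filter_upwards [hae] with t ht
  simpa only [Pi.zero_apply, mul_eq_zero, inv_eq_zero, (normSq_one_sub_pos hz t).ne', or_false,
    pow_eq_zero_iff two_ne_zero, sub_eq_zero] using ht

theorem im_etaP_mul_conj_nonneg [IsProbabilityMeasure μ] (hz : 0 < z.im) :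
    0 ≤ (etaP μ z * conj z).im := by
  rw [im_etaP_mul_conj hz.ne']
  exact mul_nonneg (div_nonneg (mul_nonneg hz.le (normSq_nonneg z)) (normSq_nonneg _))
    (sub_nonneg.2 (resolventMoment_one_sq_le hz.ne'))

variable [IsProbabilityMeasure μ] (hμ : μ (Iio 0) = 0) (hμ0 : μ ≠ Measure.dirac 0)
include hμ hμ0

theorem one_add_psiP_ne_zero (hz : z.im ≠ 0) : 1 + psiP μ z ≠ 0 := by
  intro h
  have him := congrArg im h
  rw [add_im, one_im, zero_add, im_psiP hz, zero_im] at him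
  exact mul_ne_zero hz (resolventMoment_one_pos hz hμ hμ0).ne' him

theorem im_etaP_pos (hz : 0 < z.im) : 0 < (etaP μ z).im := by
  rw [etaP, im_div_one_add, im_psiP hz.ne']
  exact div_pos (mul_pos hz (resolventMoment_one_pos hz.ne' hμ hμ0))
    (normSq_pos.2 (one_add_psiP_ne_zero hμ hμ0 hz.ne'))

theorem im_etaP_mul_conj_eq_zero_iff (hz : z.im ≠ 0) :
    (etaP μ z * conj z).im = 0 ↔ ∃ c : ℝ, μ = Measure.dirac c := by
  constructor
  · intro h
    have hz0 : normSq z ≠ 0 := normSq_eq_zero.not.2 fun h0 ↦ hz (by rw [h0, zero_im])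
    have hψ : normSq (1 + psiP μ z) ≠ 0 :=
      normSq_eq_zero.not.2 (one_add_psiP_ne_zero hμ hμ0 hz)
    rw [im_etaP_mul_conj hz] at h
    exact exists_eq_dirac_of_resolventMoment_one_sq_eq hz
      ((mul_eq_zero.1 h).resolve_left (div_ne_zero (mul_ne_zero hz hz0) hψ))
  · rintro ⟨c, rfl⟩
    rw [etaP_dirac (one_sub_mul_ofReal_ne_zero hz c), mul_right_comm, mul_conj, ← ofReal_mul,
      ofReal_im]

end Moments

section Characterization

theorem etaP_eq_of_one_add_psiP_eq_inv {μ : Measure ℝ} {z w : ℂ} (hw : 1 - w ≠ 0)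
    (h : 1 + psiP μ z = (1 - w)⁻¹) : etaP μ z = w := by
  rw [etaP, h, eq_sub_of_add_eq' h]
  field_simp
  ring

theorem exists_measure_eqOn_etaP {η : ℂ → ℂ} (hη : DifferentiableOn ℂ η SlitP)
    (hconj : ∀ z ∈ SlitP, η (conj z) = conj (η z))
    (hcone : ∀ z : ℂ, 0 < z.im → 0 ≤ (η z).im ∧ 0 ≤ (η z * conj z).im)
    (hlim : Tendsto (fun x : ℝ ↦ η x) (𝓝[<] 0) (𝓝 0)) :
    ∃ μ : Measure ℝ, IsProbabilityMeasure μ ∧ μ (Iio 0) = 0 ∧ EqOn η (etaP μ) SlitP := by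
  have hne : ∀ z ∈ SlitP, 1 - η z ≠ 0 := fun _ ↦ one_sub_eta_ne_zero hη.continuousOn hconj hcone
  obtain ⟨μ, hμ_prob, hμ, hrep⟩ := exists_measure_halfline (F := fun z ↦ (1 - η z)⁻¹)
    ((hη.const_sub 1).inv hne)
    (fun z hz ↦ by simp only [hconj z hz, map_inv₀, map_sub, map_one])
    (fun s ↦ re_mul_inv_one_sub_eta_nonneg hη.continuousOn hconj hcone)
    (by simpa using (hlim.const_sub 1).inv₀ (by simp))
  exact ⟨μ, hμ_prob, hμ, fun z hz ↦ (etaP_eq_of_one_add_psiP_eq_inv (hne z hz)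
    ((one_add_psiP hμ hz).trans (hrep z hz).symm)).symm⟩

theorem etaP_dirac_zero (z : ℂ) : etaP (Measure.dirac 0) z = 0 := by
  rw [etaP_dirac (by simp), ofReal_zero, mul_zero]

end Characterization

/-- Characterization of `η`-transforms of probability measures `μ ≠ δ₀` on
`[0,+∞)`: an analytic function `η : ℂ ∖ [0,∞) → ℂ ∖ {0}` which commutes with
conjugation equals `η_μ` for some probability measure `μ ≠ δ₀` on `[0,+∞)` iff
`η(0−) = 0` and `arg η(z) ∈ [arg z, π)` on `ℂ⁺`.  Moreover such a `μ ≠ δ₀` is a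
point mass iff `arg η_μ(z) = arg z` for some `z ∈ ℂ⁺`. -/
theorem eta_characterization_halfline
    (η : ℂ → ℂ)
    (hηd : DifferentiableOn ℂ η SlitP)
    (hη0 : ∀ z ∈ SlitP, η z ≠ 0)
    (hηconj : ∀ z ∈ SlitP, η ((starRingEnd ℂ) z) = (starRingEnd ℂ) (η z)) :
    ((∃ μ : Measure ℝ, IsProbabilityMeasure μ ∧ μ (Set.Iio 0) = 0 ∧
        μ ≠ Measure.dirac 0 ∧ Set.EqOn η (etaP μ) SlitP) ↔
      (Tendsto (fun x : ℝ => η (Complex.ofReal x)) (𝓝[<] (0:ℝ)) (𝓝 0) ∧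
        ∀ z : ℂ, 0 < z.im → z.arg ≤ (η z).arg ∧ (η z).arg < Real.pi)) ∧
    (∀ μ : Measure ℝ, IsProbabilityMeasure μ → μ (Set.Iio 0) = 0 →
      μ ≠ Measure.dirac 0 →
      ((∃ c : ℝ, μ = Measure.dirac c) ↔
        ∃ z : ℂ, 0 < z.im ∧ (etaP μ z).arg = z.arg)) := by
  have hI : 0 < I.im := by rw [I_im]; exact one_pos
  refine ⟨⟨?_, ?_⟩, fun μ _ hμ hμ0 ↦ ⟨fun hdirac ↦ ⟨I, hI, ?_⟩, ?_⟩⟩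
  · rintro ⟨μ, _, hμ, hμ0, hη⟩
    refine ⟨(tendsto_etaP_zero hμ).congr' ?_, fun z hz ↦ ?_⟩
    · filter_upwards [self_mem_nhdsWithin] with x hx using (hη (ofReal_mem_slitP.2 hx)).symm
    · rw [hη (.inr hz.ne'), arg_le_arg_and_lt_pi_iff hz]
      exact ⟨im_etaP_pos hμ hμ0 hz, im_etaP_mul_conj_nonneg hz⟩
  · rintro ⟨hlim, harg⟩
    have hcone := fun z hz ↦ ((arg_le_arg_and_lt_pi_iff hz).1 (harg z hz)).imp_left le_of_lt
    obtain ⟨μ, hμ_prob, hμ, hη⟩ := exists_measure_eqOn_etaP hηd hηconj hcone hlim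
    refine ⟨μ, hμ_prob, hμ, ?_, hη⟩
    rintro rfl
    exact hη0 I (.inr hI.ne') ((hη (.inr hI.ne')).trans (etaP_dirac_zero I))
  · exact (arg_eq_arg_iff_im_mul_conj hI (im_etaP_pos hμ hμ0 hI)).2
      ((im_etaP_mul_conj_eq_zero_iff hμ hμ0 hI.ne').2 hdirac)
  · rintro ⟨z, hz, harg⟩
    exact (im_etaP_mul_conj_eq_zero_iff hμ hμ0 hz.ne').1
      ((arg_eq_arg_iff_im_mul_conj hz (im_etaP_pos hμ hμ0 hz)).1 harg)
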